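/- Let γ ∈ ℝ, η > 0, and let g : (0,∞) → ℝ be differentiable with g'(x) = −exp(γ·x/η)/x for every x > 0. Let p : ℝ → ℝ → ℝ be twice differentiable in x and differentiable in t, solving the Feller equation ∂ₜp(x,t) = ∂ₓ( x·(γ·p(x,t) + η·∂ₓp(x,t)) ) for all x > 0 and t ∈ ℝ. Define 𝔊(x,t) := −η·exp(γ·x/η)·p(x,t) − x·( γ·g(x)·p(x,t) + η·g(x)·∂ₓp(x,t) ). Then the conservation law ∂ₜ( g(x)·p(x,t) ) + ∂ₓ𝔊(x,t) = 0 holds for all x > 0 and t ∈ ℝ. -/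

import Mathlib

/-!
Multiplying `∂ₜp + ∂ₓ𝔉 = 0` by `g(x)` gives `∂ₜ(g p) + ∂ₓ(g 𝔉) - g' 𝔉 = 0`. For
`g' = -exp(γx/η)/x` the factor `x` of `𝔉` cancels, and what remains,
`g' 𝔉 = exp(γx/η) (γ p + η ∂ₓp)`, is the exact derivative `∂ₓ(η exp(γx/η) p)`; hence
`𝔊 = g 𝔉 - η exp(γx/η) p` is a flux for the density `g p`.
-/

section Feller

variable {E : Type*} [NormedAddCommGroup E] [NormedSpace ℝ E]
  {γ η x t : ℝ} {g : ℝ → ℝ} {u : ℝ → E}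

/-- The flux `𝔉 = -x (γ u + η ∂ₓu)` of the Feller equation for a spatial profile `u`, with
values in a real normed space. -/
noncomputable def fellerFlux (γ η : ℝ) (u : ℝ → E) (x : ℝ) : E :=
  -(x • (γ • u x + η • deriv u x))

/-- The flux `𝔊` of the density `g u`, for a spatial profile `u` and a multiplier `g` in the
role of `x ↦ E₁(-γx/η)`. -/
noncomputable def fellerMultiplierFlux (γ η : ℝ) (g : ℝ → ℝ) (u : ℝ → E) (x : ℝ) : E :=
  -((η * Real.exp (γ * x / η)) • u x) - x • ((γ * g x) • u x + (η * g x) • deriv u x)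

theorem fellerMultiplierFlux_eq_smul_fellerFlux_sub (γ η : ℝ) (g : ℝ → ℝ) (u : ℝ → E) :
    fellerMultiplierFlux γ η g u =
      fun y => g y • fellerFlux γ η u y - (η * Real.exp (γ * y / η)) • u y := by
  funext y
  simp only [fellerMultiplierFlux, fellerFlux]
  module

theorem deriv_fellerFlux (γ η : ℝ) (u : ℝ → E) (x : ℝ) :
    deriv (fellerFlux γ η u) x = -deriv (fun y => y • (γ • u y + η • deriv u y)) x :=
  deriv.fun_neg

theorem differentiableAt_fellerFlux (hu : DifferentiableAt ℝ u x)
    (hu' : DifferentiableAt ℝ (deriv u) x) : DifferentiableAt ℝ (fellerFlux γ η u) x :=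
  (differentiableAt_id.smul ((hu.const_smul γ).add (hu'.const_smul η))).neg

theorem hasDerivAt_mul_exp_smul {u' : E} (hη : η ≠ 0) (hu : HasDerivAt u u' x) :
    HasDerivAt (fun y => (η * Real.exp (γ * y / η)) • u y)
      (Real.exp (γ * x / η) • (γ • u x + η • u')) x := by
  have hexp : HasDerivAt (fun y => η * Real.exp (γ * y / η)) (γ * Real.exp (γ * x / η)) x := by
    refine ((((hasDerivAt_id' x).const_mul γ).div_const η).exp.const_mul η).congr_deriv ?_
    field_simp
  refine (hexp.smul hu).congr_deriv ?_
  module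

theorem hasDerivAt_fellerMultiplierFlux (hη : η ≠ 0) (hx : x ≠ 0)
    (hg : HasDerivAt g (-(Real.exp (γ * x / η)) / x) x) (hu : DifferentiableAt ℝ u x)
    (hu' : DifferentiableAt ℝ (deriv u) x) :
    HasDerivAt (fellerMultiplierFlux γ η g u) (g x • deriv (fellerFlux γ η u) x) x := by
  have hflux := (differentiableAt_fellerFlux (γ := γ) (η := η) hu hu').hasDerivAt
  have hcancel : (-(Real.exp (γ * x / η)) / x) • fellerFlux γ η u x =
      Real.exp (γ * x / η) • (γ • u x + η • deriv u x) := by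
    rw [fellerFlux, smul_neg, smul_smul, div_mul_cancel₀ _ hx, neg_smul, neg_neg]
  rw [fellerMultiplierFlux_eq_smul_fellerFlux_sub]
  refine ((hg.smul hflux).sub (hasDerivAt_mul_exp_smul hη hu.hasDerivAt)).congr_deriv ?_
  rw [hcancel, add_sub_cancel_right]

theorem feller_conservation_law_general {p : ℝ → ℝ → E} (hη : η ≠ 0) (hx : x ≠ 0)
    (hg : HasDerivAt g (-(Real.exp (γ * x / η)) / x) x)
    (hdx : DifferentiableAt ℝ (fun y => p y t) x)
    (hdxx : DifferentiableAt ℝ (deriv fun y => p y t) x)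
    (hdt : DifferentiableAt ℝ (fun τ => p x τ) t)
    (heq : deriv (fun τ => p x τ) t + deriv (fellerFlux γ η fun y => p y t) x = 0) :
    deriv (fun τ => g x • p x τ) t +
      deriv (fellerMultiplierFlux γ η g fun y => p y t) x = 0 := by
  rw [deriv_fun_const_smul (g x) hdt,
    (hasDerivAt_fellerMultiplierFlux hη hx hg hdx hdxx).deriv, ← smul_add, heq, smul_zero]

end Feller

/-- Conservation law of the Feller equation with the exponential-integral
multiplier: if `p` solves `∂ₜp = ∂ₓ( x·(γ·p + η·∂ₓp) )` for `x > 0` and `g`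
is an antiderivative realizing `x ↦ E₁(−γx/η)` (i.e. `g'(x) = −exp(γx/η)/x`),
then `∂ₜ(g(x)·p(x,t)) + ∂ₓ𝔊(x,t) = 0` with
`𝔊 = −η·e^{γx/η}·p − x·(γ·g·p + η·g·∂ₓp)`. -/
theorem feller_conservation_law (γ η : ℝ) (hη : 0 < η)
    (g : ℝ → ℝ) (hg : ∀ x > 0, HasDerivAt g (-(Real.exp (γ * x / η)) / x) x)
    (p : ℝ → ℝ → ℝ)
    (hdx : ∀ x > 0, ∀ t : ℝ, DifferentiableAt ℝ (fun y => p y t) x)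
    (hdxx : ∀ x > 0, ∀ t : ℝ, DifferentiableAt ℝ (deriv fun y => p y t) x)
    (hdt : ∀ x > 0, ∀ t : ℝ, DifferentiableAt ℝ (fun τ => p x τ) t)
    (heq : ∀ x > 0, ∀ t : ℝ,
      deriv (fun τ => p x τ) t =
        deriv (fun y => y * (γ * p y t + η * deriv (fun z => p z t) y)) x)
    (G : ℝ → ℝ → ℝ)
    (hG : ∀ x t, G x t =
      -(η * Real.exp (γ * x / η) * p x t) -
        x * (γ * g x * p x t + η * g x * deriv (fun y => p y t) x)) :
    ∀ x > 0, ∀ t : ℝ,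
      deriv (fun τ => g x * p x τ) t + deriv (fun y => G y t) x = 0 := by
  intro x hx t
  have hflux : deriv (fun τ => p x τ) t + deriv (fellerFlux γ η fun y => p y t) x = 0 := by
    rw [heq x hx t, deriv_fellerFlux]
    exact add_neg_cancel _
  simpa only [hG] using! feller_conservation_law_general hη.ne' hx.ne' (hg x hx)
    (hdx x hx t) (hdxx x hx t) (hdt x hx t) hflux
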